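/- arXiv:2509.14359 — 3 statements merged into one kernel-verified Lean document; each statement's English description precedes it below -/
import Mathlib

section
/- Let N = {n_1,…,n_s; n} be a scheme for distinct nodes X = {A_1,…,A_s} ⊂ ℝ² with n_1 ≥ n_2 ≥ ⋯ ≥ n_s ≥ 1, n_1 + n_2 ≤ n + 1, n_1 + ⋯ + n_s = 2n + 1 and s ≥ 5. Suppose all nodes of X lie on the conic given by an irreducible bivariate real polynomial β⁰ of degree 2, i.e. β⁰(A_k) = 0 for all k. Then every p ∈ Π_n satisfying D^{ij}p(A_k) = 0 for all i+j ≤ n_k−1 and all k = 1,…,s factors as p = β⁰·q with q ∈ Π_{n−2}. -/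
open MvPolynomial

/-- `Dij i j p` is the partial derivative `D^{ij} p = ∂^{i+j} p / ∂x^i ∂y^j`. -/
noncomputable def Dij (i j : ℕ) (p : MvPolynomial (Fin 2) ℝ) : MvPolynomial (Fin 2) ℝ :=
  (fun q => pderiv (0 : Fin 2) q)^[i] ((fun q => pderiv (1 : Fin 2) q)^[j] p)


theorem exists_elim {R : Type*} [CommRing R] [IsDomain R] [UniqueFactorizationMonoid R]
    (F P : Polynomial R) (hF : Irreducible F) (hd : F.natDegree ≠ 0) (hn : ¬ F ∣ P) :
    ∃ r : R, r ≠ 0 ∧ ∃ u v : Polynomial R, u * F + v * P = Polynomial.C r := by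
  classical
  let _ : NormalizedGCDMonoid R := Classical.arbitrary _
  have hprim := hF.isPrimitive hd
  have hirr := (hprim.irreducible_iff_irreducible_map_fraction_map (K := FractionRing R)).1 hF
  have hnd := fun h => hn (hprim.dvd_of_fraction_map_dvd_fraction_map (K := FractionRing R) h)
  obtain ⟨a, b, hab⟩ := (hirr.coprime_iff_not_dvd).2 hnd
  obtain ⟨c, c0, hc⟩ := IsLocalization.integerNormalization_spec (nonZeroDivisors R) a
  obtain ⟨d, d0, hd⟩ := IsLocalization.integerNormalization_spec (nonZeroDivisors R) b
  rw [Algebra.smul_def, Polynomial.algebraMap_apply] at hc hd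
  rw [mem_nonZeroDivisors_iff_ne_zero] at c0 d0
  refine ⟨c * d, mul_ne_zero c0 d0,
    Polynomial.C d * IsLocalization.integerNormalization (nonZeroDivisors R) a,
    Polynomial.C c * IsLocalization.integerNormalization (nonZeroDivisors R) b, ?_⟩
  apply Polynomial.map_injective _ (IsFractionRing.injective R (FractionRing R))
  simp only [Polynomial.map_add, Polynomial.map_mul, hc, hd, Polynomial.map_C, map_mul]
  linear_combination (Polynomial.C ((algebraMap R (FractionRing R)) c) * Polynomial.C ((algebraMap R (FractionRing R)) d)) * hab

theorem dvd_of_infinite (f p : MvPolynomial (Fin 2) ℝ) (hf : Irreducible f)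
    (h : {y : ℝ | ∃ x : ℝ, eval ![x, y] f = 0 ∧ eval ![x, y] p = 0}.Infinite) : f ∣ p := by
  have key : ∀ (x y : ℝ) (g : MvPolynomial (Fin 2) ℝ), eval ![x, y] g =
      Polynomial.eval x (Polynomial.map (eval ![y]) (finSuccEquiv ℝ 1 g)) := by
    intro x y g
    exact eval_eq_eval_mv_eval' ![y] x g
  have zero : ∀ r : MvPolynomial (Fin 1) ℝ,
      (∀ x y, eval ![x, y] f = 0 → eval ![x, y] p = 0 → eval ![y] r = 0) → r = 0 := by
    intro r hr
    refine funext_set (fun _ => _) (fun _ => h) ?_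
    intro z hz
    obtain ⟨x, h1, h2⟩ := hz 0 (Set.mem_univ _)
    have : z = ![z 0] := by ext i; fin_cases i; rfl
    rw [this, map_zero]
    exact hr x (z 0) h1 h2
  have hF : Irreducible (finSuccEquiv ℝ 1 f) := (MulEquiv.irreducible_iff (finSuccEquiv ℝ 1)).2 hf
  by_contra hn
  have hn' : ¬ finSuccEquiv ℝ 1 f ∣ finSuccEquiv ℝ 1 p := by
    rwa [map_dvd_iff]
  by_cases hd : (finSuccEquiv ℝ 1 f).natDegree = 0
  · obtain ⟨r, hr⟩ := Polynomial.natDegree_eq_zero.1 hd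
    have : r = 0 := by
      apply zero
      intro x y h1 _
      rw [key, ← hr] at h1
      simpa using h1
    apply hF.ne_zero
    rw [← hr, this, map_zero]
  · obtain ⟨r, hr, u, v, huv⟩ := exists_elim _ _ hF hd hn'
    apply hr
    apply zero
    intro x y h1 h2
    rw [key] at h1 h2
    have := congrArg (fun q => Polynomial.eval x (Polynomial.map (eval ![y]) q)) huv
    simp only [Polynomial.map_add, Polynomial.map_mul, Polynomial.eval_add, Polynomial.eval_mul, h1, h2] at this
    simpa using this.symm

/-- homogenised substitution -/
noncomputable def Hom (n : ℕ) (p : MvPolynomial (Fin 2) ℝ) (x y w : Polynomial ℝ) : Polynomial ℝ :=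
  ∑ m ∈ p.support, Polynomial.C (coeff m p) * (x ^ (m 0) * y ^ (m 1) * w ^ (n - (m 0 + m 1)))

theorem supp_le {n : ℕ} {p : MvPolynomial (Fin 2) ℝ} (hp : p.totalDegree ≤ n) {m : Fin 2 →₀ ℕ}
    (hm : m ∈ p.support) : m 0 + m 1 ≤ n := by
  have := (le_totalDegree hm).trans hp
  rw [Finsupp.sum_fintype _ _ (by simp)] at this
  simpa [Fin.sum_univ_two] using this

theorem Hom_eval {n : ℕ} {p : MvPolynomial (Fin 2) ℝ} (hp : p.totalDegree ≤ n)
    (x y w : Polynomial ℝ) (t : ℝ) (hw : w.eval t ≠ 0) :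
    (Hom n p x y w).eval t =
      w.eval t ^ n * eval ![x.eval t / w.eval t, y.eval t / w.eval t] p := by
  rw [Hom, Polynomial.eval_finsetSum, eval_eq', Finset.mul_sum]
  refine Finset.sum_congr rfl fun m hm => ?_
  have h := supp_le hp hm
  obtain ⟨d, hd⟩ := Nat.exists_eq_add_of_le h
  have : n - (m 0 + m 1) = d := by omega
  rw [this, hd]
  simp [Fin.prod_univ_two, div_pow, pow_add]
  field_simp

theorem Hom_natDegree {n : ℕ} {p : MvPolynomial (Fin 2) ℝ} (hp : p.totalDegree ≤ n)
    (x y w : Polynomial ℝ) (hx : x.natDegree ≤ 2) (hy : y.natDegree ≤ 2) (hw : w.natDegree ≤ 2) :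
    (Hom n p x y w).natDegree ≤ 2 * n := by
  apply Polynomial.natDegree_sum_le_of_forall_le
  intro m hm
  have h := supp_le hp hm
  refine (Polynomial.natDegree_C_mul_le _ _).trans ?_
  refine Polynomial.natDegree_mul_le.trans ?_
  have h1 := Polynomial.natDegree_mul_le (p := x ^ m 0) (q := y ^ m 1)
  have h2 := Polynomial.natDegree_pow_le_of_le (m 0) hx
  have h3 := Polynomial.natDegree_pow_le_of_le (m 1) hy
  have h4 := Polynomial.natDegree_pow_le_of_le (n - (m 0 + m 1)) hw
  omega

/-- translation -/
noncomputable def shift (a : Fin 2 → ℝ) : MvPolynomial (Fin 2) ℝ →ₐ[ℝ] MvPolynomial (Fin 2) ℝ :=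
  aeval (fun i => X i + C (a i))

theorem shift_eval (a z : Fin 2 → ℝ) (p : MvPolynomial (Fin 2) ℝ) :
    eval z (shift a p) = eval (z + a) p := by
  induction p using MvPolynomial.induction_on with
  | C r => simp [shift]
  | add p q hp hq => simp [hp, hq]
  | mul_X p i hp => simp [hp]; left; simp [shift]

theorem shift_pderiv (a : Fin 2 → ℝ) (i : Fin 2) (p : MvPolynomial (Fin 2) ℝ) :
    pderiv i (shift a p) = shift a (pderiv i p) := by
  induction p using MvPolynomial.induction_on with
  | C r => simp [shift]
  | add p q hp hq => simp [hp, hq]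
  | mul_X p j hp =>
    rw [map_mul, pderiv_mul, pderiv_mul, hp, map_add, map_mul, map_mul]
    congr 2
    have : shift a (X j) = X j + C (a j) := by simp [shift]
    rw [this]
    by_cases h : j = i
    · subst h; simp
    · simp [pderiv_X_of_ne h]

theorem shift_Dij (a : Fin 2 → ℝ) (i j : ℕ) (p : MvPolynomial (Fin 2) ℝ) :
    Dij i j (shift a p) = shift a (Dij i j p) := by
  have : ∀ (l : Fin 2) (i : ℕ) (p : MvPolynomial (Fin 2) ℝ),
      (fun q => pderiv l q)^[i] (shift a p) = shift a ((fun q => pderiv l q)^[i] p) := by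
    intro l i
    induction i with
    | zero => intro p; rfl
    | succ i ih => intro p; simp only [Function.iterate_succ_apply]; rw [shift_pderiv, ih]
  rw [Dij, this, this]; rfl

theorem iter_coeff (l : Fin 2) (i : ℕ) : ∀ (m : Fin 2 →₀ ℕ), ∃ c : ℝ, c ≠ 0 ∧
    ∀ p : MvPolynomial (Fin 2) ℝ, coeff m ((fun q => pderiv l q)^[i] p) =
      coeff (m + Finsupp.single l i) p * c := by
  induction i with
  | zero => intro m; exact ⟨1, one_ne_zero, fun p => by simp⟩
  | succ i ih =>
    intro m
    obtain ⟨c, hc, h⟩ := ih m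
    refine ⟨((m + Finsupp.single l i) l + 1 : ℝ) * c, mul_ne_zero (by positivity) hc, fun p => ?_⟩
    rw [Function.iterate_succ_apply, h, coeff_pderiv, add_assoc, ← Finsupp.single_add]
    push_cast; ring

theorem coeff_shift_zero (a : Fin 2 → ℝ) (N : ℕ) (p : MvPolynomial (Fin 2) ℝ)
    (h : ∀ i j : ℕ, i + j + 1 ≤ N → eval a (Dij i j p) = 0) (m : Fin 2 →₀ ℕ)
    (hm : m 0 + m 1 < N) : coeff m (shift a p) = 0 := by
  have h1 := h (m 0) (m 1) hm
  have h2 : eval 0 (shift a (Dij (m 0) (m 1) p)) = 0 := by rw [shift_eval, zero_add, h1]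
  rw [← shift_Dij, eval_zero, constantCoeff_eq, Dij] at h2
  obtain ⟨c, hc, h3⟩ := iter_coeff 0 (m 0) 0
  obtain ⟨c', hc', h4⟩ := iter_coeff 1 (m 1) (0 + Finsupp.single 0 (m 0))
  rw [h3, h4] at h2
  have : 0 + Finsupp.single 0 (m 0) + Finsupp.single 1 (m 1) = m := by
    ext i; fin_cases i <;> simp
  rw [this] at h2
  simpa [hc, hc'] using h2

theorem shift_totalDegree (a : Fin 2 → ℝ) (p : MvPolynomial (Fin 2) ℝ) :
    (shift a p).totalDegree ≤ p.totalDegree := by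
  have h1 : ∀ i : Fin 2, (X i + C (a i) : MvPolynomial (Fin 2) ℝ).totalDegree ≤ 1 := by
    intro i
    refine (totalDegree_add _ _).trans ?_
    simp
  rw [shift, aeval_def, eval₂_eq']
  refine totalDegree_finsetSum_le fun m hm => ?_
  refine (totalDegree_mul _ _).trans ?_
  have h0 := supp_le le_rfl hm
  have h2 := (totalDegree_pow (X 0 + C (a 0) : MvPolynomial (Fin 2) ℝ) (m 0)).trans
    (Nat.mul_le_mul_left _ (h1 0))
  have h3 := (totalDegree_pow (X 1 + C (a 1) : MvPolynomial (Fin 2) ℝ) (m 1)).trans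
    (Nat.mul_le_mul_left _ (h1 1))
  have h4 := totalDegree_mul ((X 0 + C (a 0) : MvPolynomial (Fin 2) ℝ) ^ (m 0))
    ((X 1 + C (a 1)) ^ (m 1))
  have h5 : (algebraMap ℝ (MvPolynomial (Fin 2) ℝ) (coeff m p)).totalDegree = 0 :=
    totalDegree_C _
  rw [Fin.prod_univ_two, h5]
  omega

theorem Hom_shift {n : ℕ} {p : MvPolynomial (Fin 2) ℝ} (hp : p.totalDegree ≤ n)
    (x y w : Polynomial ℝ) (hw : w ≠ 0) (a : Fin 2 → ℝ) :
    Hom n p x y w =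
      Hom n (shift a p) (x - Polynomial.C (a 0) * w) (y - Polynomial.C (a 1) * w) w := by
  apply Polynomial.eq_of_infinite_eval_eq
  have hfin : {t : ℝ | w.eval t = 0}.Finite := by
    refine (w.roots.toFinset.finite_toSet).subset fun t ht => ?_
    simpa [hw] using ht
  refine hfin.infinite_compl.mono fun t ht => ?_
  have ht' : w.eval t ≠ 0 := ht
  show Polynomial.eval t _ = Polynomial.eval t _
  rw [Hom_eval hp _ _ _ _ ht', Hom_eval ((shift_totalDegree a p).trans hp) _ _ _ _ ht', shift_eval]
  congr 3
  ext i; fin_cases i <;> simp <;> field_simp <;> ring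

theorem Hom_dvd {n : ℕ} {p : MvPolynomial (Fin 2) ℝ} (hp : p.totalDegree ≤ n)
    (x y w : Polynomial ℝ) (hw : w ≠ 0) (a : Fin 2 → ℝ) (N : ℕ)
    (h : ∀ i j : ℕ, i + j + 1 ≤ N → eval a (Dij i j p) = 0) (t : ℝ)
    (hx : x.eval t = a 0 * w.eval t) (hy : y.eval t = a 1 * w.eval t) :
    (Polynomial.X - Polynomial.C t) ^ N ∣ Hom n p x y w := by
  rw [Hom_shift hp x y w hw a]
  have hx' : Polynomial.X - Polynomial.C t ∣ x - Polynomial.C (a 0) * w := by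
    rw [Polynomial.dvd_iff_isRoot]; simp [hx]
  have hy' : Polynomial.X - Polynomial.C t ∣ y - Polynomial.C (a 1) * w := by
    rw [Polynomial.dvd_iff_isRoot]; simp [hy]
  refine Finset.dvd_sum fun m hm => ?_
  have hm' : N ≤ m 0 + m 1 := by
    by_contra hlt
    exact (mem_support_iff.1 hm) (coeff_shift_zero a N p h m (by omega))
  refine Dvd.dvd.mul_left (Dvd.dvd.mul_right ?_ _) _
  refine (pow_dvd_pow _ hm').trans ?_
  rw [pow_add]
  exact mul_dvd_mul (pow_dvd_pow_of_dvd hx' _) (pow_dvd_pow_of_dvd hy' _)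

theorem Hom_zero {n s : ℕ} {p : MvPolynomial (Fin 2) ℝ} (hp : p.totalDegree ≤ n)
    (nk : Fin s → ℕ) (hsum : ∑ k, nk k = 2 * n + 1) (A : Fin s → Fin 2 → ℝ)
    (hvan : ∀ (k : Fin s) (i j : ℕ), i + j + 1 ≤ nk k → eval (A k) (Dij i j p) = 0)
    (x y w : Polynomial ℝ) (hw : w ≠ 0)
    (hx2 : x.natDegree ≤ 2) (hy2 : y.natDegree ≤ 2) (hw2 : w.natDegree ≤ 2)
    (τ : Fin s → ℝ) (hτ : Function.Injective τ)
    (hx : ∀ k, x.eval (τ k) = A k 0 * w.eval (τ k))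
    (hy : ∀ k, y.eval (τ k) = A k 1 * w.eval (τ k)) : Hom n p x y w = 0 := by
  have hd : (∏ k, (Polynomial.X - Polynomial.C (τ k)) ^ nk k) ∣ Hom n p x y w := by
    apply Finset.prod_dvd_of_coprime
    · intro i _ j _ hij
      exact (Polynomial.isCoprime_X_sub_C_of_isUnit_sub
        (sub_ne_zero.2 (hτ.ne hij)).isUnit).pow
    · intro k _
      exact Hom_dvd hp x y w hw (A k) _ (hvan k) _ (hx k) (hy k)
  by_contra h0
  have h1 := Polynomial.natDegree_le_of_dvd hd h0
  have h2 := Hom_natDegree hp x y w hx2 hy2 hw2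
  rw [Polynomial.natDegree_prod _ _ fun k _ => pow_ne_zero _ (Polynomial.X_sub_C_ne_zero _)] at h1
  simp [hsum] at h1
  omega

theorem quad_form (f : MvPolynomial (Fin 2) ℝ) (hf : f.totalDegree ≤ 2) :
    ∃ c l0 l1 q0 q1 q2 : ℝ, f = C c + C l0 * X 0 + C l1 * X 1 + C q0 * X 0 ^ 2
      + C q1 * (X 0 * X 1) + C q2 * X 1 ^ 2 := by
  let e : ℕ → ℕ → (Fin 2 →₀ ℕ) := fun i j => Finsupp.single 0 i + Finsupp.single 1 j
  have he : ∀ m : Fin 2 →₀ ℕ, m = e (m 0) (m 1) := by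
    intro m; ext i; fin_cases i <;> simp [e]
  have hmon : ∀ (i j : ℕ) (r : ℝ), C r * (X 0 ^ i * X 1 ^ j) = monomial (e i j) r := by
    intro i j r
    rw [X_pow_eq_monomial, X_pow_eq_monomial, monomial_mul, C_mul_monomial]; simp [e]
  have hee : ∀ i j i' j', e i j = e i' j' ↔ i = i' ∧ j = j' := by
    intro i j i' j'
    constructor
    · intro h
      have h0 := DFunLike.congr_fun h 0
      have h1 := DFunLike.congr_fun h 1
      simp [e] at h0 h1
      exact ⟨h0, h1⟩
    · rintro ⟨rfl, rfl⟩; rfl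
  refine ⟨coeff (e 0 0) f, coeff (e 1 0) f, coeff (e 0 1) f, coeff (e 2 0) f, coeff (e 1 1) f,
    coeff (e 0 2) f, ?_⟩
  have : C (coeff (e 0 0) f) + C (coeff (e 1 0) f) * X 0 + C (coeff (e 0 1) f) * X 1
      + C (coeff (e 2 0) f) * X 0 ^ 2
      + C (coeff (e 1 1) f) * (X 0 * X 1) + C (coeff (e 0 2) f) * X 1 ^ 2
      = monomial (e 0 0) (coeff (e 0 0) f) + monomial (e 1 0) (coeff (e 1 0) f)
      + monomial (e 0 1) (coeff (e 0 1) f) + monomial (e 2 0) (coeff (e 2 0) f)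
      + monomial (e 1 1) (coeff (e 1 1) f) + monomial (e 0 2) (coeff (e 0 2) f) := by
    simp only [← hmon]; ring
  rw [this]
  ext m
  rw [he m]
  by_cases hm : m 0 + m 1 ≤ 2
  · generalize m 0 = i at *
    generalize m 1 = j at *
    simp only [coeff_add, coeff_monomial, hee]
    have hi : i ≤ 2 := by omega
    have hj : j ≤ 2 := by omega
    interval_cases i <;> interval_cases j <;> first | omega | simp
  · have h0 : coeff (e (m 0) (m 1)) f = 0 := by
      by_contra h
      rw [← he] at h
      exact hm (supp_le hf (mem_support_iff.2 h))
    rw [h0]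
    generalize m 0 = i at *
    generalize m 1 = j at *
    simp only [coeff_add, coeff_monomial, hee]
    rw [if_neg, if_neg, if_neg, if_neg, if_neg, if_neg] <;> first | simp; done | omega

/-- expansion of an irreducible conic at one of its points; it contains no line through it -/
theorem conic_expand (f : MvPolynomial (Fin 2) ℝ) (hirr : Irreducible f) (hf : f.totalDegree = 2)
    (a b : ℝ) (h0 : eval ![a, b] f = 0) :
    ∃ l0 l1 q0 q1 q2 : ℝ, (∀ u v : ℝ, eval ![a + u, b + v] f =
      l0 * u + l1 * v + (q0 * u ^ 2 + q1 * u * v + q2 * v ^ 2)) ∧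
      ∀ u v : ℝ, l0 * u + l1 * v = 0 → q0 * u ^ 2 + q1 * u * v + q2 * v ^ 2 = 0 →
        u = 0 ∧ v = 0 := by
  obtain ⟨c, m0, m1, q0, q1, q2, rfl⟩ := quad_form f hf.le
  simp at h0
  set f : MvPolynomial (Fin 2) ℝ := C c + C m0 * X 0 + C m1 * X 1 + C q0 * X 0 ^ 2
      + C q1 * (X 0 * X 1) + C q2 * X 1 ^ 2 with hfdef
  refine ⟨m0 + 2 * q0 * a + q1 * b, m1 + q1 * a + 2 * q2 * b, q0, q1, q2, ?_, ?_⟩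
  · intro u v
    simp [hfdef]
    linear_combination h0
  · intro u v hL hQ
    by_contra hne
    have main : ∀ (ℓ0 ℓ1 α β γ : ℝ), f = (C ℓ0 * (X 0 - C a) + C ℓ1 * (X 1 - C b)) *
        (C γ + C α * (X 0 - C a) + C β * (X 1 - C b)) → False := by
      intro ℓ0 ℓ1 α β γ hfac
      have hl : ∀ (α β a b γ : ℝ), (C γ + C α * (X 0 - C a) + C β * (X 1 - C b) :
          MvPolynomial (Fin 2) ℝ).totalDegree ≤ 1 := by
        intro α β a b γ
        have e1 : ∀ (i : Fin 2) (α a : ℝ), (C α * (X i - C a) : MvPolynomial (Fin 2) ℝ).totalDegree ≤ 1 := by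
          intro i α a
          refine (totalDegree_mul _ _).trans ?_
          rw [totalDegree_C, zero_add]
          refine (totalDegree_sub _ _).trans ?_
          simp
        refine (totalDegree_add _ _).trans (max_le ((totalDegree_add _ _).trans (max_le ?_ (e1 _ _ _))) (e1 _ _ _))
        simp
      have hl1 := hl ℓ0 ℓ1 a b 0
      have hl2 := hl α β a b γ
      rw [C_0, zero_add] at hl1
      rcases hirr.isUnit_or_isUnit hfac with h | h
      · have := h.map (eval ![a, b])
        simp at this
      · have h' := isUnit_iff_totalDegree_of_isReduced.1 h
        have := totalDegree_mul (C ℓ0 * (X 0 - C a) + C ℓ1 * (X 1 - C b)) (C γ + C α * (X 0 - C a) + C β * (X 1 - C b) : MvPolynomial (Fin 2) ℝ)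
        rw [← hfac, hf, h'.2] at this
        omega
    have hc : c = -(m0 * a + m1 * b + q0 * a ^ 2 + q1 * (a * b) + q2 * b ^ 2) := by
      linear_combination h0
    by_cases hu : u = 0
    · have hv : v ≠ 0 := fun hv => hne ⟨hu, hv⟩
      subst hu
      have e2 : q2 = 0 := by simpa [hv] using hQ
      have e1 : m1 = - (q1 * a + 2 * q2 * b) := by
        have : m1 + q1 * a + 2 * q2 * b = 0 := by simpa [hv] using hL
        linear_combination this
      apply main 1 0 q0 q1 (m0 + 2 * q0 * a + q1 * b)
      rw [hfdef, hc, e1, e2]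
      simp only [map_add, map_mul, map_neg, map_pow, C_0, C_1, map_ofNat]
      ring
    · -- v = k u
      obtain ⟨k, rfl⟩ : ∃ k, v = k * u := ⟨v / u, by field_simp⟩
      have e0 : m0 = - (2 * q0 * a + q1 * b) - k * (m1 + q1 * a + 2 * q2 * b) := by
        apply mul_right_cancel₀ hu
        linear_combination hL
      have e1 : q0 = - (q1 * k) - q2 * k ^ 2 := by
        apply mul_right_cancel₀ (pow_ne_zero 2 hu)
        linear_combination hQ
      apply main (-k) 1 (q1 + k * q2) q2 (m1 + q1 * a + 2 * q2 * b)
      rw [hfdef, hc, e0, e1]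
      simp only [map_add, map_sub, map_mul, map_neg, map_pow, C_0, C_1, map_ofNat]
      ring

theorem exists_param (s : ℕ) (hs : 5 ≤ s) (A : Fin s → Fin 2 → ℝ) (hA : Function.Injective A)
    (f : MvPolynomial (Fin 2) ℝ) (hirr : Irreducible f) (hdeg : f.totalDegree = 2)
    (hon : ∀ k, eval (A k) f = 0) :
    ∃ (x y w : Polynomial ℝ) (τ : Fin s → ℝ), w ≠ 0 ∧ x.natDegree ≤ 2 ∧ y.natDegree ≤ 2 ∧
      w.natDegree ≤ 2 ∧ Function.Injective τ ∧
      (∀ k, x.eval (τ k) = A k 0 * w.eval (τ k)) ∧ (∀ k, y.eval (τ k) = A k 1 * w.eval (τ k)) ∧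
      (∀ t, w.eval t ≠ 0 → eval ![x.eval t / w.eval t, y.eval t / w.eval t] f = 0) ∧
      (∀ c : ℝ, y ≠ Polynomial.C c * w) := by
  have hvec : ∀ z : Fin 2 → ℝ, ![z 0, z 1] = z := by
    intro z; ext i; fin_cases i <;> rfl
  let o : Fin s := ⟨0, by omega⟩
  let i1 : Fin s := ⟨1, by omega⟩
  let i2 : Fin s := ⟨2, by omega⟩
  have h1o : i1 ≠ o := by simp [i1, o]
  have h2o : i2 ≠ o := by simp [i2, o]
  have h12 : i1 ≠ i2 := by simp [i1, i2]
  set a := A o 0 with ha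
  set b := A o 1 with hb
  obtain ⟨l0, l1, q0, q1, q2, hexp, hline⟩ := conic_expand f hirr hdeg a b (by rw [ha, hb, hvec, hon])
  have hLQ : ∀ k, l0 * (A k 0 - a) + l1 * (A k 1 - b) +
      (q0 * (A k 0 - a) ^ 2 + q1 * (A k 0 - a) * (A k 1 - b) + q2 * (A k 1 - b) ^ 2) = 0 := by
    intro k
    rw [← hexp, add_sub_cancel, add_sub_cancel, hvec, hon]
  have hne : ∀ k j, A k 0 = A j 0 → A k 1 = A j 1 → k = j := by
    intro k j h0 h1
    apply hA
    rw [← hvec (A k), ← hvec (A j), h0, h1]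
  have hLne : ∀ k, k ≠ o → l0 * (A k 0 - a) + l1 * (A k 1 - b) ≠ 0 := by
    intro k hk h
    obtain ⟨h0, h1⟩ := hline _ _ h (by linear_combination hLQ k - h)
    exact hk (hne k o (by linarith) (by linarith))
  -- directions
  let u : Fin s → ℝ := fun k => if k = o then -l1 else A k 0 - a
  let v : Fin s → ℝ := fun k => if k = o then l0 else A k 1 - b
  have huo : u o = -l1 := by simp [u]
  have hvo : v o = l0 := by simp [v]
  have huk : ∀ k, k ≠ o → u k = A k 0 - a := fun k hk => by simp [u, hk]
  have hvk : ∀ k, k ≠ o → v k = A k 1 - b := fun k hk => by simp [v, hk]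
  have hQ : ∀ k, q0 * u k ^ 2 + q1 * u k * v k + q2 * v k ^ 2 ≠ 0 := by
    intro k h
    by_cases hk : k = o
    · subst hk
      rw [huo, hvo] at h
      obtain ⟨h0, h1⟩ := hline (-l1) l0 (by ring) h
      apply hLne i1 h1o
      rw [h1, neg_eq_zero.1 h0]; ring
    · rw [huk k hk, hvk k hk] at h
      apply hLne k hk
      linear_combination hLQ k - h
  have huv : ∀ k, ¬ (u k = 0 ∧ v k = 0) := by
    rintro k ⟨h0, h1⟩
    apply hQ k
    rw [h0, h1]; ring
  have hcross : ∀ k j, u k * v j = u j * v k → k = j := by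
    have half : ∀ j, j ≠ o → u o * v j ≠ u j * v o := by
      intro j hj h
      rw [huo, hvo, huk j hj, hvk j hj] at h
      apply hLne j hj
      linear_combination -h
    intro k j h
    by_cases hk : k = o
    · by_cases hj : j = o
      · rw [hk, hj]
      · subst hk; exact absurd h (half j hj)
    · by_cases hj : j = o
      · subst hj; exact absurd h.symm (half k hk)
      · rw [huk k hk, hvk k hk, huk j hj, hvk j hj] at h
        have hL := hLne k hk
        have e1 := hLQ k
        have e2 := hLQ j
        -- (u_j,v_j) L(k) = (u_k,v_k) L(j)
        generalize hU : A k 0 - a = U at *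
        generalize hV : A k 1 - b = V at *
        generalize hU' : A j 0 - a = U' at *
        generalize hV' : A j 1 - b = V' at *
        set c := (l0 * U' + l1 * V') / (l0 * U + l1 * V) with hc
        have hu' : U' = c * U := by
          rw [hc]; field_simp; linear_combination - l1 * h
        have hv' : V' = c * V := by
          rw [hc]; field_simp; linear_combination l0 * h
        have hc0 : c ≠ 0 := by
          have := hLne j hj
          rw [hU', hV'] at this
          exact div_ne_zero this hL
        have hc1 : c = 1 := by
          have : c * (1 - c) * (l0 * U + l1 * V) = 0 := by
            rw [hu', hv'] at e2
            linear_combination e2 - c ^ 2 * e1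
          have := (mul_eq_zero.1 this).resolve_right hL
          have := (mul_eq_zero.1 this).resolve_left hc0
          linarith
        rw [hc1, one_mul] at hu' hv'
        exact hne k j (by linarith) (by linarith)
  -- generic direction
  obtain ⟨m, hm⟩ : ∃ m : ℝ, ∀ k, v k - m * u k ≠ 0 := by
    have hfin : (⋃ k, {m : ℝ | v k - m * u k = 0}).Finite := by
      apply Set.finite_iUnion
      intro k
      apply Set.Subsingleton.finite
      intro m hm m' hm'
      simp only [Set.mem_setOf_eq] at hm hm'
      by_contra hmm
      have : (m - m') * u k = 0 := by linear_combination hm' - hm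
      have h0 := (mul_eq_zero.1 this).resolve_left (sub_ne_zero.2 hmm)
      exact huv k ⟨h0, by rw [h0] at hm; linarith⟩
    obtain ⟨m, hm⟩ := hfin.infinite_compl.nonempty
    refine ⟨m, fun k hk => hm (Set.mem_iUnion.2 ⟨k, hk⟩)⟩
  let d0 : Polynomial ℝ := Polynomial.X
  let d1 : Polynomial ℝ := Polynomial.C m * Polynomial.X + Polynomial.C 1
  let L : Polynomial ℝ := Polynomial.C l0 * d0 + Polynomial.C l1 * d1
  let w : Polynomial ℝ := Polynomial.C q0 * d0 ^ 2 + Polynomial.C q1 * (d0 * d1) + Polynomial.C q2 * d1 ^ 2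
  let x : Polynomial ℝ := Polynomial.C a * w - L * d0
  let y : Polynomial ℝ := Polynomial.C b * w - L * d1
  let τ : Fin s → ℝ := fun k => u k / (v k - m * u k)
  have ed0 : ∀ t, d0.eval t = t := fun t => by simp [d0]
  have ed1 : ∀ t, d1.eval t = m * t + 1 := fun t => by simp [d1]
  have eL : ∀ t, L.eval t = l0 * d0.eval t + l1 * d1.eval t := fun t => by simp [L]
  have ew : ∀ t, w.eval t = q0 * d0.eval t ^ 2 + q1 * d0.eval t * d1.eval t + q2 * d1.eval t ^ 2 :=
    fun t => by simp [w, mul_assoc]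
  have ex : ∀ t, x.eval t = a * w.eval t - L.eval t * d0.eval t := fun t => by simp [x]
  have ey : ∀ t, y.eval t = b * w.eval t - L.eval t * d1.eval t := fun t => by simp [y]
  have hd0 : ∀ k, d0.eval (τ k) = (v k - m * u k)⁻¹ * u k := fun k => by
    rw [ed0]; simp only [τ]; ring
  have hd1 : ∀ k, d1.eval (τ k) = (v k - m * u k)⁻¹ * v k := fun k => by
    rw [ed1]; simp only [τ]; have := hm k; field_simp; ring
  have hwk : ∀ k, w.eval (τ k) ≠ 0 := by
    intro k
    have : w.eval (τ k) = (v k - m * u k)⁻¹ ^ 2 * (q0 * u k ^ 2 + q1 * u k * v k + q2 * v k ^ 2) := by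
      rw [ew, hd0, hd1]; ring
    rw [this]
    exact mul_ne_zero (pow_ne_zero _ (inv_ne_zero (hm k))) (hQ k)
  have hLw : ∀ k, k ≠ o → L.eval (τ k) = - (v k - m * u k) * w.eval (τ k) := by
    intro k hk
    have h := hLQ k
    rw [← huk k hk, ← hvk k hk] at h
    rw [eL, ew, hd0, hd1]
    have := hm k
    field_simp
    linear_combination h
  have hLo : L.eval (τ o) = 0 := by
    rw [eL, hd0, hd1, huo, hvo]; ring
  have hdeg1 : d1.natDegree ≤ 1 := Polynomial.natDegree_linear_le
  have hdeg0 : d0.natDegree ≤ 1 := Polynomial.natDegree_X_le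
  have hLd : L.natDegree ≤ 1 := by
    refine Polynomial.natDegree_add_le_of_degree_le ?_ ?_
    · exact (Polynomial.natDegree_C_mul_le _ _).trans hdeg0
    · exact (Polynomial.natDegree_C_mul_le _ _).trans hdeg1
  have hwd : w.natDegree ≤ 2 := by
    refine Polynomial.natDegree_add_le_of_degree_le
      (Polynomial.natDegree_add_le_of_degree_le ?_ ?_) ?_
    · exact (Polynomial.natDegree_C_mul_le _ _).trans (Polynomial.natDegree_pow_le_of_le 2 hdeg0)
    · exact (Polynomial.natDegree_C_mul_le _ _).trans (Polynomial.natDegree_mul_le_of_le hdeg0 hdeg1)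
    · exact (Polynomial.natDegree_C_mul_le _ _).trans (Polynomial.natDegree_pow_le_of_le 2 hdeg1)
  have hyk : ∀ k, y.eval (τ k) = A k 1 * w.eval (τ k) := by
    intro k
    rw [ey]
    by_cases hk : k = o
    · subst hk; rw [hLo]; ring
    · rw [hLw k hk, hd1, hvk k hk]
      have := hm k
      rw [hvk k hk] at this
      field_simp; ring
  refine ⟨x, y, w, τ, ?_, ?_, ?_, hwd, ?_, ?_, hyk, ?_, ?_⟩
  · intro h; apply hwk o; rw [h]; simp
  · refine (Polynomial.natDegree_sub_le _ _).trans (max_le ?_ ?_)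
    · exact (Polynomial.natDegree_C_mul_le _ _).trans hwd
    · exact Polynomial.natDegree_mul_le_of_le hLd hdeg0
  · refine (Polynomial.natDegree_sub_le _ _).trans (max_le ?_ ?_)
    · exact (Polynomial.natDegree_C_mul_le _ _).trans hwd
    · exact Polynomial.natDegree_mul_le_of_le hLd hdeg1
  · intro k j h
    have h' : u k / (v k - m * u k) = u j / (v j - m * u j) := h
    rw [div_eq_div_iff (hm k) (hm j)] at h'
    apply hcross
    linear_combination h'
  · intro k
    rw [ex]
    by_cases hk : k = o
    · subst hk; rw [hLo]; ring
    · rw [hLw k hk, hd0, huk k hk]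
      have := hm k
      rw [huk k hk] at this
      field_simp; ring
  · intro t ht
    have e1 : x.eval t / w.eval t = a + - L.eval t * d0.eval t / w.eval t := by
      rw [ex]; field_simp; ring
    have e2 : y.eval t / w.eval t = b + - L.eval t * d1.eval t / w.eval t := by
      rw [ey]; field_simp; ring
    rw [e1, e2, hexp]
    have hw' := ew t
    have hl' := eL t
    generalize w.eval t = W at *
    generalize L.eval t = Λ at *
    field_simp
    rw [hl', hw']; ring
  · intro c hc
    have : ∀ k, A k 1 = c := by
      intro k
      apply mul_right_cancel₀ (hwk k)
      rw [← hyk k, hc]; simp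
    apply h12
    apply hcross
    rw [hvk _ h1o, hvk _ h2o, this i1, this i2, hb, this o]; ring

theorem stmt_12 (n s : ℕ) (hs : 5 ≤ s) (nk : Fin s → ℕ)
    (hpos : ∀ k, 1 ≤ nk k) (hdec : ∀ i j : Fin s, i ≤ j → nk j ≤ nk i)
    (h12 : nk ⟨0, by omega⟩ + nk ⟨1, by omega⟩ ≤ n + 1)
    (hsum : ∑ k, nk k = 2 * n + 1)
    (A : Fin s → Fin 2 → ℝ) (hA : Function.Injective A)
    (b0 : MvPolynomial (Fin 2) ℝ) (hirr : Irreducible b0) (hdeg : b0.totalDegree = 2)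
    (hon : ∀ k, eval (A k) b0 = 0)
    (p : MvPolynomial (Fin 2) ℝ) (hp : p.totalDegree ≤ n)
    (hvan : ∀ (k : Fin s) (i j : ℕ), i + j + 1 ≤ nk k → eval (A k) (Dij i j p) = 0) :
    ∃ q : MvPolynomial (Fin 2) ℝ, q.totalDegree ≤ n - 2 ∧ p = b0 * q := by
  obtain ⟨x, y, w, τ, hw, hx2, hy2, hw2, hτ, hx, hy, hcurve, hnc⟩ :=
    exists_param s hs A hA b0 hirr hdeg hon
  have hH := Hom_zero hp nk hsum A hvan x y w hw hx2 hy2 hw2 τ hτ hx hy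
  have hdvd : b0 ∣ p := by
    apply dvd_of_infinite b0 p hirr
    intro hfin
    have hroots : {t : ℝ | w.eval t = 0}.Finite := by
      refine (w.roots.toFinset.finite_toSet).subset fun t ht => ?_
      simpa [hw] using ht
    have hmaps : Set.MapsTo (fun t => y.eval t / w.eval t) {t : ℝ | w.eval t = 0}ᶜ
        {y : ℝ | ∃ x : ℝ, eval ![x, y] b0 = 0 ∧ eval ![x, y] p = 0} := by
      intro t ht
      have ht' : w.eval t ≠ 0 := ht
      refine ⟨x.eval t / w.eval t, hcurve t ht', ?_⟩
      have h1 := Hom_eval hp x y w t ht'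
      rw [hH, Polynomial.eval_zero] at h1
      exact (mul_eq_zero.1 h1.symm).resolve_left (pow_ne_zero _ ht')
    have hunion : ({t : ℝ | w.eval t = 0}ᶜ : Set ℝ).Finite := by
      refine Set.Finite.of_finite_fibers (fun t => y.eval t / w.eval t)
        (hfin.subset hmaps.image_subset) ?_
      intro c _
      have hne : y - Polynomial.C c * w ≠ 0 := sub_ne_zero.2 (hnc c)
      refine ((y - Polynomial.C c * w).roots.toFinset.finite_toSet).subset ?_
      rintro t ⟨ht, htc⟩
      have ht' : w.eval t ≠ 0 := ht
      have htc' : y.eval t / w.eval t = c := htc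
      have : y.eval t - c * w.eval t = 0 := by rw [← htc']; field_simp; ring
      simp [hne, this]
    exact hroots.infinite_compl hunion
  obtain ⟨q, rfl⟩ := hdvd
  refine ⟨q, ?_, rfl⟩
  by_cases hq : q = 0
  · simp [hq]
  · rw [totalDegree_mul_of_isDomain hirr.ne_zero hq, hdeg] at hp
    omega
end

section
/- Let m ≥ 1 and let A_1, A_2, A_3, A_4 be four distinct points of ℝ² no three of which are collinear. Then the Hermite problem with scheme {m, m, m, m−1; 2m−1} is (2m−1)-correct; equivalently, the only p ∈ Π_{2m−1} with D^{ij}p(A_k) = 0 for all i+j ≤ m−1 (k = 1,2,3) and all i+j ≤ m−2 (k = 4) is p = 0. -/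
open MvPolynomial

/-- The Hermite interpolation problem with multiplicities `nk` on the nodes `A` is
`n`-correct: every data admits a unique interpolant in `Π_n`. -/
def HermiteCorrect (n s : ℕ) (nk : Fin s → ℕ) (A : Fin s → Fin 2 → ℝ) : Prop :=
  ∀ c : Fin s → ℕ → ℕ → ℝ,
    ∃! p : MvPolynomial (Fin 2) ℝ, p.totalDegree ≤ n ∧
      ∀ (k : Fin s) (i j : ℕ), i + j + 1 ≤ nk k → eval (A k) (Dij i j p) = c k i j

set_option linter.unusedSimpArgs false

/-- `p(A + t(X,Y))` as a polynomial in `t`. -/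
noncomputable def shiftT (A : Fin 2 → ℝ) :
    MvPolynomial (Fin 2) ℝ →ₐ[ℝ] Polynomial (MvPolynomial (Fin 2) ℝ) :=
  MvPolynomial.aeval (fun i => Polynomial.C (MvPolynomial.C (A i)) +
    Polynomial.X * Polynomial.C (MvPolynomial.X i))

/-- multiplicity at least `n` at `A`. -/
def MultGe (n : ℕ) (A : Fin 2 → ℝ) (p : MvPolynomial (Fin 2) ℝ) : Prop :=
  (Polynomial.X : Polynomial (MvPolynomial (Fin 2) ℝ)) ^ n ∣ shiftT A p

/-- restriction to the line through `A`, `B`. -/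
noncomputable def lineR (A B : Fin 2 → ℝ) : MvPolynomial (Fin 2) ℝ →ₐ[ℝ] Polynomial ℝ :=
  MvPolynomial.aeval (fun i => Polynomial.C (A i) + Polynomial.X * Polynomial.C (B i - A i))

/-- the equation of the line through `A`, `B`. -/
noncomputable def lin (A B : Fin 2 → ℝ) : MvPolynomial (Fin 2) ℝ :=
  C (B 0 - A 0) * (X 1 - C (A 1)) - C (B 1 - A 1) * (X 0 - C (A 0))

theorem eval_lin (A B P : Fin 2 → ℝ) : eval P (lin A B) =
    (B 0 - A 0) * (P 1 - A 1) - (B 1 - A 1) * (P 0 - A 0) := by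
  simp [lin]

theorem shift_coeff_zero (A : Fin 2 → ℝ) (p : MvPolynomial (Fin 2) ℝ) :
    (shiftT A p).coeff 0 = C (eval A p) := by
  induction p using MvPolynomial.induction_on with
  | C a => simp [shiftT, Polynomial.algebraMap_apply, MvPolynomial.algebraMap_eq]
  | add p q hp hq => simp [hp, hq]
  | mul_X p i hp => simp only [map_mul, Polynomial.mul_coeff_zero, hp]; simp [shiftT]

theorem shift_deriv (A : Fin 2 → ℝ) (p : MvPolynomial (Fin 2) ℝ) :
    Polynomial.derivative (shiftT A p) =
      Polynomial.C (X 0) * shiftT A (pderiv 0 p) + Polynomial.C (X 1) * shiftT A (pderiv 1 p) := by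
  induction p using MvPolynomial.induction_on with
  | C a => simp [shiftT, Polynomial.algebraMap_apply]
  | add p q hp hq => simp only [map_add, hp, hq]; ring
  | mul_X p i hp =>
    have hX : Polynomial.derivative (shiftT A (X i)) = Polynomial.C (X i) := by
      simp [shiftT]
    simp only [map_mul, Polynomial.derivative_mul, hp, hX, Derivation.leibniz, smul_eq_mul, map_add]
    fin_cases i
    · simp [pderiv_X]; ring
    · simp [pderiv_X]; ring

theorem X_pow_dvd_of_derivative (n : ℕ) (f : Polynomial (MvPolynomial (Fin 2) ℝ))
    (h0 : f.coeff 0 = 0) (h : Polynomial.X ^ n ∣ Polynomial.derivative f) :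
    Polynomial.X ^ (n + 1) ∣ f := by
  rw [Polynomial.X_pow_dvd_iff] at h ⊢
  intro d hd
  cases d with
  | zero => exact h0
  | succ d =>
    have := h d (by omega)
    rw [Polynomial.coeff_derivative] at this
    rcases mul_eq_zero.1 this with h | h
    · exact h
    · exfalso; exact (Nat.cast_add_one_ne_zero (R := MvPolynomial (Fin 2) ℝ) d) h

theorem pderiv_comm01 (p : MvPolynomial (Fin 2) ℝ) :
    pderiv 1 (pderiv 0 p) = pderiv 0 (pderiv 1 p) := by
  induction p using MvPolynomial.induction_on with
  | C a => simp
  | add p q hp hq => simp [hp, hq]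
  | mul_X p i hp =>
    fin_cases i
    · simp [pderiv_X, hp]; ring
    · simp [pderiv_X, hp]; ring

theorem Dij_pderiv0 (i j : ℕ) (p : MvPolynomial (Fin 2) ℝ) :
    Dij i j (pderiv 0 p) = Dij (i + 1) j p := by
  have : ∀ p : MvPolynomial (Fin 2) ℝ, (fun q => pderiv (1 : Fin 2) q)^[j] (pderiv 0 p) =
      pderiv 0 ((fun q => pderiv (1 : Fin 2) q)^[j] p) := by
    induction j with
    | zero => intro p; rfl
    | succ j ih =>
      intro p
      rw [Function.iterate_succ_apply, Function.iterate_succ_apply, pderiv_comm01, ih]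
  unfold Dij
  rw [this, Function.iterate_succ_apply]

theorem multGe_of_Dij (n : ℕ) (A : Fin 2 → ℝ) : ∀ (p : MvPolynomial (Fin 2) ℝ),
    (∀ i j, i + j < n → eval A (Dij i j p) = 0) → MultGe n A p := by
  induction n with
  | zero => intro p _; simp [MultGe]
  | succ n ih =>
    intro p h
    apply X_pow_dvd_of_derivative
    · rw [shift_coeff_zero]
      have := h 0 0 (by omega)
      simp only [Dij, Function.iterate_zero, id] at this
      simp [this]
    · rw [shift_deriv]
      apply dvd_add
      · exact Dvd.dvd.mul_left (ih _ fun i j hij => by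
          rw [Dij_pderiv0]; exact h _ _ (by omega)) _
      · exact Dvd.dvd.mul_left (ih _ fun i j hij => h i (j + 1) (by omega)) _

theorem mult_mono {n k : ℕ} (h : k ≤ n) {A : Fin 2 → ℝ} {p : MvPolynomial (Fin 2) ℝ}
    (hp : MultGe n A p) : MultGe k A p := (pow_dvd_pow _ h).trans hp

theorem mult_off {n : ℕ} {P A B : Fin 2 → ℝ} {q : MvPolynomial (Fin 2) ℝ}
    (h : eval P (lin A B) ≠ 0) (hp : MultGe n P (lin A B * q)) : MultGe n P q := by
  unfold MultGe at *
  rw [map_mul] at hp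
  refine Polynomial.prime_X.pow_dvd_of_dvd_mul_left _ ?_ hp
  rw [Polynomial.X_dvd_iff, shift_coeff_zero]
  simpa using h

theorem mult_on {n : ℕ} {P A B : Fin 2 → ℝ} {q : MvPolynomial (Fin 2) ℝ} (hAB : A ≠ B)
    (h : eval P (lin A B) = 0) (hp : MultGe n P (lin A B * q)) : MultGe (n - 1) P q := by
  cases n with
  | zero => simp [MultGe]
  | succ n =>
  unfold MultGe at *
  rw [map_mul] at hp
  have e : shiftT P (lin A B) = Polynomial.X *
      Polynomial.C (C (B 0 - A 0) * X 1 - C (B 1 - A 1) * X 0) := by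
    rw [eval_lin] at h
    have h' : (Polynomial.C (C (B 0 - A 0)) * (Polynomial.C (C (P 1)) - Polynomial.C (C (A 1)))
      - Polynomial.C (C (B 1 - A 1)) * (Polynomial.C (C (P 0)) - Polynomial.C (C (A 0))) :
        Polynomial (MvPolynomial (Fin 2) ℝ)) = 0 := by
      simp only [← map_sub, ← map_mul, h, map_zero]
    have hC : ∀ a : ℝ, shiftT P (C a) = Polynomial.C (C a) := by
      intro a; simp [shiftT, Polynomial.algebraMap_apply, MvPolynomial.algebraMap_eq]
    have hX : ∀ i, shiftT P (X i) = Polynomial.C (C (P i)) +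
      Polynomial.X * Polynomial.C (X i) := by intro i; simp [shiftT]
    simp only [lin, map_sub, map_mul, hC, hX]
    simp only [map_sub] at h'
    linear_combination h'
  rw [e, pow_succ', mul_assoc] at hp
  have hp := (mul_dvd_mul_iff_left (Polynomial.X_ne_zero)).1 hp
  refine Polynomial.prime_X.pow_dvd_of_dvd_mul_left _ ?_ hp
  rw [Polynomial.X_dvd_iff, Polynomial.coeff_C_zero]
  intro h0
  apply hAB
  have h1 := congrArg (eval ![0, 1]) h0
  have h2 := congrArg (eval ![1, 0]) h0
  simp at h1 h2
  funext i
  fin_cases i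
  · simp; linarith
  · simp; linarith

theorem lineR_dvd_left {n : ℕ} {A B : Fin 2 → ℝ} {p : MvPolynomial (Fin 2) ℝ}
    (h : MultGe n A p) : Polynomial.X ^ n ∣ lineR A B p := by
  have e : (Polynomial.mapAlgHom (MvPolynomial.aeval (fun i => B i - A i))).comp (shiftT A)
      = lineR A B := by
    apply MvPolynomial.algHom_ext
    intro i
    simp [shiftT, lineR]
    ring
  have := map_dvd (Polynomial.mapAlgHom (MvPolynomial.aeval (R := ℝ) (fun i => B i - A i))) h
  rw [← e]
  simpa using this

theorem lineR_dvd_right {n : ℕ} {A B : Fin 2 → ℝ} {p : MvPolynomial (Fin 2) ℝ}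
    (h : MultGe n B p) : (1 - Polynomial.X) ^ n ∣ lineR A B p := by
  have e : (Polynomial.aeval (1 - Polynomial.X : Polynomial ℝ)).comp (lineR B A)
      = lineR A B := by
    apply MvPolynomial.algHom_ext
    intro i
    simp [lineR]
    ring
  have := map_dvd (Polynomial.aeval (1 - Polynomial.X : Polynomial ℝ)) (lineR_dvd_left (B := A) h)
  rw [← e]
  simpa using this

theorem lineR_natDegree (A B : Fin 2 → ℝ) (p : MvPolynomial (Fin 2) ℝ) :
    (lineR A B p).natDegree ≤ p.totalDegree := by
  have := MvPolynomial.aeval_natDegree_le (n := 1) p (le_refl p.totalDegree) 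
    (fun i => Polynomial.C (A i) + Polynomial.X * Polynomial.C (B i - A i)) (by
      intro i; compute_degree)
  rw [mul_one] at this
  exact this

theorem lineR_zero {n k : ℕ} {A B : Fin 2 → ℝ} {p : MvPolynomial (Fin 2) ℝ}
    (hA : MultGe n A p) (hB : MultGe k B p) (hd : p.totalDegree < n + k) :
    lineR A B p = 0 := by
  have hc : IsCoprime ((Polynomial.X : Polynomial ℝ) ^ n) ((1 - Polynomial.X) ^ k) :=
    IsCoprime.pow ⟨1, 1, by ring⟩
  have h := hc.mul_dvd (lineR_dvd_left (B := B) hA) (lineR_dvd_right (A := A) hB)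
  by_contra h0
  have h1 := Polynomial.natDegree_le_of_dvd h h0
  have h2 : ((1 - Polynomial.X : Polynomial ℝ)).natDegree = 1 := by
    rw [← neg_sub, Polynomial.natDegree_neg]; exact Polynomial.natDegree_X_sub_C 1
  have h3 : (1 - Polynomial.X : Polynomial ℝ) ≠ 0 := by
    intro h; rw [h] at h2; simp at h2
  rw [Polynomial.natDegree_mul (pow_ne_zero _ Polynomial.X_ne_zero) (pow_ne_zero _ h3),
    Polynomial.natDegree_pow, Polynomial.natDegree_pow, h2, Polynomial.natDegree_X] at h1
  have := lineR_natDegree A B p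
  omega

theorem lin_dvd {A B : Fin 2 → ℝ} (hAB : A ≠ B) {p : MvPolynomial (Fin 2) ℝ}
    (h : lineR A B p = 0) : lin A B ∣ p := by
  let I := Ideal.span {lin A B}
  have key : ∀ τ : MvPolynomial (Fin 2) ℝ,
      (∀ i, lin A B ∣ X i - (C (A i) + τ * C (B i - A i))) → lin A B ∣ p := by
    intro τ hτ
    have e : ((Polynomial.aeval (Ideal.Quotient.mkₐ ℝ I τ)).comp (lineR A B))
        = Ideal.Quotient.mkₐ ℝ I := by
      apply MvPolynomial.algHom_ext
      intro i
      have h1 : Ideal.Quotient.mkₐ ℝ I (X i) =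
          Ideal.Quotient.mkₐ ℝ I (C (A i) + τ * C (B i - A i)) := by
        simp only [Ideal.Quotient.mkₐ_eq_mk]
        rw [Ideal.Quotient.eq]
        exact Ideal.mem_span_singleton.2 (hτ i)
      rw [h1]
      have hC : ∀ a : ℝ, Ideal.Quotient.mkₐ ℝ I (C a) = algebraMap ℝ _ a := by
        intro a; rw [← MvPolynomial.algebraMap_eq]; exact AlgHom.commutes _ _
      rw [map_add, map_mul, hC, hC]
      simp [lineR]
    have h2 := congrArg (fun φ => φ p) e
    simp only [AlgHom.comp_apply, h, map_zero, Ideal.Quotient.mkₐ_eq_mk] at h2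
    exact Ideal.mem_span_singleton.1 (Ideal.Quotient.eq_zero_iff_mem.1 h2.symm)
  by_cases h0 : B 0 - A 0 = 0
  · have h1 : B 1 - A 1 ≠ 0 := by
      intro h1; apply hAB; funext i; fin_cases i
      · simp; linarith
      · simp; linarith
    have hC : (C (B 1 - A 1)⁻¹ * C (B 1 - A 1) : MvPolynomial (Fin 2) ℝ) = 1 := by
      rw [← map_mul, inv_mul_cancel₀ h1, map_one]
    refine key (C (B 1 - A 1)⁻¹ * (X 1 - C (A 1))) (fun i => ?_)
    fin_cases i
    · refine ⟨-C (B 1 - A 1)⁻¹, ?_⟩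
      simp only [lin, Fin.zero_eta, Fin.mk_one]
      linear_combination (-(X 0 - C (A 0))) * hC
    · refine ⟨0, ?_⟩
      simp only [lin, Fin.zero_eta, Fin.mk_one]
      linear_combination (-(X 1 - C (A 1))) * hC
  · have hC : (C (B 0 - A 0)⁻¹ * C (B 0 - A 0) : MvPolynomial (Fin 2) ℝ) = 1 := by
      rw [← map_mul, inv_mul_cancel₀ h0, map_one]
    refine key (C (B 0 - A 0)⁻¹ * (X 0 - C (A 0))) (fun i => ?_)
    fin_cases i
    · refine ⟨0, ?_⟩
      simp only [lin, Fin.zero_eta, Fin.mk_one]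
      linear_combination (-(X 0 - C (A 0))) * hC
    · refine ⟨C (B 0 - A 0)⁻¹, ?_⟩
      simp only [lin, Fin.zero_eta, Fin.mk_one]
      linear_combination (-(X 1 - C (A 1))) * hC

theorem lin_ne_zero {A B : Fin 2 → ℝ} (hAB : A ≠ B) :
    eval ![A 0 - (B 1 - A 1), A 1 + (B 0 - A 0)] (lin A B) ≠ 0 := by
  rw [eval_lin]
  simp only [Matrix.cons_val_zero, Matrix.cons_val_one]
  intro h
  have h0 : B 0 - A 0 = 0 := by nlinarith [sq_nonneg (B 0 - A 0), sq_nonneg (B 1 - A 1)]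
  have h1 : B 1 - A 1 = 0 := by nlinarith [sq_nonneg (B 0 - A 0), sq_nonneg (B 1 - A 1)]
  apply hAB; funext i; fin_cases i
  · simp; linarith
  · simp; linarith

theorem lin_totalDegree {A B : Fin 2 → ℝ} (hAB : A ≠ B) : (lin A B).totalDegree = 1 := by
  apply le_antisymm
  · have hl : ∀ (c a : ℝ) (i : Fin 2),
        (C c * (X i - C a) : MvPolynomial (Fin 2) ℝ).totalDegree ≤ 1 := by
      intro c a i
      refine (totalDegree_mul _ _).trans ?_
      rw [totalDegree_C, zero_add]
      exact (totalDegree_sub_C_le _ _).trans (by simp)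
    exact (totalDegree_sub _ _).trans (max_le (hl _ _ _) (hl _ _ _))
  · by_contra hlt
    have h0 : (lin A B).totalDegree = 0 := by omega
    rw [totalDegree_eq_zero_iff_eq_C] at h0
    have h1 : eval A (lin A B) = 0 := by rw [eval_lin]; ring
    apply lin_ne_zero hAB
    rw [h0, eval_C] at h1 ⊢
    exact h1

theorem step {A B : Fin 2 → ℝ} (hAB : A ≠ B) {p : MvPolynomial (Fin 2) ℝ} (hp : p ≠ 0)
    {n k : ℕ} (hA : MultGe n A p) (hB : MultGe k B p) (hd : p.totalDegree < n + k) :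
    ∃ q : MvPolynomial (Fin 2) ℝ, q ≠ 0 ∧ q.totalDegree + 1 = p.totalDegree ∧
      MultGe (n - 1) A q ∧ MultGe (k - 1) B q ∧
      ∀ P, eval P (lin A B) ≠ 0 → ∀ r, MultGe r P p → MultGe r P q := by
  obtain ⟨q, rfl⟩ := lin_dvd hAB (lineR_zero hA hB hd)
  have hq : q ≠ 0 := by rintro rfl; simp at hp
  have hl : lin A B ≠ 0 := by intro h; simp [h] at hp
  refine ⟨q, hq, ?_, mult_on hAB (by rw [eval_lin]; ring) hA,
    mult_on hAB (by rw [eval_lin]; ring) hB, fun P hP r hr => mult_off hP hr⟩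
  rw [totalDegree_mul_of_isDomain hl hq, lin_totalDegree hAB]; ring

theorem unique_main (A : Fin 4 → Fin 2 → ℝ)
    (hA : Function.Injective A)
    (hne : ∀ i j k : Fin 4, i ≠ j → i ≠ k → j ≠ k → eval (A k) (lin (A i) (A j)) ≠ 0) (m : ℕ) :
    ∀ (p : MvPolynomial (Fin 2) ℝ), p ≠ 0 → p.totalDegree + 1 ≤ 2 * m →
      MultGe m (A 0) p → MultGe m (A 1) p → MultGe m (A 2) p → MultGe (m - 1) (A 3) p →
      False := by
  induction m using Nat.strong_induction_on with
  | _ m ih =>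
  intro p hp hd h0 h1 h2 h3
  have nq : ∀ i j : Fin 4, i ≠ j → A i ≠ A j := fun i j h h' => h (hA h')
  obtain ⟨q1, z1, d1, a0, a1, f⟩ := step (nq 0 1 (by decide)) hp h0 h1 (by omega)
  have a2 := f _ (hne 0 1 2 (by decide) (by decide) (by decide)) _ h2
  have a3 := f _ (hne 0 1 3 (by decide) (by decide) (by decide)) _ h3
  clear f h0 h1 h2 h3
  obtain ⟨q2, z2, d2, b0, b2, f⟩ := step (nq 0 2 (by decide)) z1 a0 a2 (by omega)
  have b1 := f _ (hne 0 2 1 (by decide) (by decide) (by decide)) _ a1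
  have b3 := f _ (hne 0 2 3 (by decide) (by decide) (by decide)) _ a3
  clear f a0 a1 a2 a3
  obtain ⟨q3, z3, d3, c1, c2, f⟩ := step (nq 1 2 (by decide)) z2 b1 b2 (by omega)
  have c0 := f _ (hne 1 2 0 (by decide) (by decide) (by decide)) _ b0
  have c3 := f _ (hne 1 2 3 (by decide) (by decide) (by decide)) _ b3
  clear f b0 b1 b2 b3
  obtain ⟨q4, z4, d4, e0, e3, f⟩ := step (nq 0 3 (by decide)) z3 c0 c3 (by omega)
  have e1 := f _ (hne 0 3 1 (by decide) (by decide) (by decide)) _ c1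
  have e2 := f _ (hne 0 3 2 (by decide) (by decide) (by decide)) _ c2
  clear f c0 c1 c2 c3
  obtain ⟨q5, z5, d5, g1, g3, f⟩ := step (nq 1 3 (by decide)) z4 e1 e3 (by omega)
  have g0 := f _ (hne 1 3 0 (by decide) (by decide) (by decide)) _ e0
  have g2 := f _ (hne 1 3 2 (by decide) (by decide) (by decide)) _ e2
  clear f e0 e1 e2 e3
  obtain ⟨q6, z6, d6, k2, k3, f⟩ := step (nq 2 3 (by decide)) z5 g2 g3 (by omega)
  have k0 := f _ (hne 2 3 0 (by decide) (by decide) (by decide)) _ g0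
  have k1 := f _ (hne 2 3 1 (by decide) (by decide) (by decide)) _ g1
  clear f g0 g1 g2 g3
  exact ih (m - 3) (by omega) q6 z6 (by omega) (mult_mono (by omega) k0)
    (mult_mono (by omega) k1) (mult_mono (by omega) k2) (mult_mono (by omega) k3)

/-- pairs `(i,j)` with `i + j < n`. -/
def triS (n : ℕ) : Finset (ℕ × ℕ) := (Finset.range n).biUnion Finset.HasAntidiagonal.antidiagonal

theorem mem_triS (n : ℕ) (x : ℕ × ℕ) : x ∈ triS n ↔ x.1 + x.2 < n := by
  simp [triS]

theorem card_triS (n : ℕ) : 2 * (triS n).card = n * (n + 1) := by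
  have : (triS n).card = ∑ i ∈ Finset.range n, (i + 1) := by
    rw [triS, Finset.card_biUnion]
    · simp
    · intro i _ j _ hij
      rw [Function.onFun, Finset.disjoint_left]
      intro x hx hy
      simp at hx hy
      omega
  rw [this]
  clear this
  induction n with
  | zero => simp
  | succ n ih => rw [Finset.sum_range_succ, mul_add, ih]; ring

theorem Dij_add (i j : ℕ) (p q : MvPolynomial (Fin 2) ℝ) :
    Dij i j (p + q) = Dij i j p + Dij i j q := by
  have h : ∀ (k : Fin 2) (n : ℕ) (p q : MvPolynomial (Fin 2) ℝ),
      (fun q => pderiv k q)^[n] (p + q) = (fun q => pderiv k q)^[n] p +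
        (fun q => pderiv k q)^[n] q := by
    intro k n
    induction n with
    | zero => intro p q; rfl
    | succ n ih => intro p q; simp only [Function.iterate_succ, Function.comp, map_add, ih]
  simp only [Dij, h]

theorem Dij_smul (i j : ℕ) (c : ℝ) (p : MvPolynomial (Fin 2) ℝ) :
    Dij i j (c • p) = c • Dij i j p := by
  have h : ∀ (k : Fin 2) (n : ℕ) (p : MvPolynomial (Fin 2) ℝ),
      (fun q => pderiv k q)^[n] (c • p) = c • (fun q => pderiv k q)^[n] p := by
    intro k n
    induction n with
    | zero => intro p; rfl
    | succ n ih =>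
      intro p; simp only [Function.iterate_succ, Function.comp, Derivation.map_smul, ih]
  simp only [Dij, h]

/-- exponent vector. -/
noncomputable def expo (x : ℕ × ℕ) : Fin 2 →₀ ℕ := Finsupp.single 0 x.1 + Finsupp.single 1 x.2

theorem expo_inj : Function.Injective expo := by
  intro x y h
  have h0 := DFunLike.congr_fun h 0
  have h1 := DFunLike.congr_fun h 1
  simp [expo] at h0 h1
  exact Prod.ext h0 h1

/-- polynomial with given coefficients. -/
noncomputable def ofCoeffs (n : ℕ) : (triS n → ℝ) →ₗ[ℝ] MvPolynomial (Fin 2) ℝ where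
  toFun c := ∑ x : triS n, monomial (expo x.1) (c x)
  map_add' c d := by simp [Finset.sum_add_distrib]
  map_smul' r c := by simp [Finset.smul_sum, smul_monomial]

theorem ofCoeffs_deg (n : ℕ) (c : triS n → ℝ) : (ofCoeffs n c).totalDegree ≤ n - 1 := by
  refine totalDegree_finsetSum_le (s := Finset.univ)
    (f := fun x : triS n => monomial (expo x.1) (c x)) ?_
  intro x _
  refine (totalDegree_monomial_le _ _).trans ?_
  have := (mem_triS n x).1 x.2
  rw [Finsupp.sum_fintype _ _ (by simp)]
  simp [expo]
  omega

theorem ofCoeffs_inj (n : ℕ) (c : triS n → ℝ) (h : ofCoeffs n c = 0) : c = 0 := by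
  funext x
  have := congrArg (coeff (expo x.1)) h
  change coeff (expo x.1) (∑ x : triS n, monomial (expo x.1) (c x)) = 0 at this
  rw [MvPolynomial.coeff_sum] at this
  simp only [coeff_monomial, expo_inj.eq_iff, Subtype.coe_inj] at this
  rw [Finset.sum_ite_eq' Finset.univ x c, if_pos (Finset.mem_univ x)] at this
  exact this

/-- interpolation data map. -/
noncomputable def dataMap (nk : Fin 4 → ℕ) (A : Fin 4 → Fin 2 → ℝ) :
    MvPolynomial (Fin 2) ℝ →ₗ[ℝ] ((Σ k, triS (nk k)) → ℝ) where
  toFun p x := eval (A x.1) (Dij x.2.1.1 x.2.1.2 p)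
  map_add' p q := by funext x; simp [Dij_add]
  map_smul' c p := by funext x; simp [Dij_smul]

theorem correct_of_unique (m : ℕ) (hm : 1 ≤ m) (A : Fin 4 → Fin 2 → ℝ)
    (hu : ∀ p : MvPolynomial (Fin 2) ℝ, p.totalDegree ≤ 2 * m - 1 →
      (∀ (k : Fin 4) (i j : ℕ), i + j + 1 ≤ ![m, m, m, m - 1] k → eval (A k) (Dij i j p) = 0) →
      p = 0) :
    HermiteCorrect (2 * m - 1) 4 ![m, m, m, m - 1] A := by
  intro c
  let F := (dataMap ![m, m, m, m - 1] A).comp (ofCoeffs (2 * m))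
  have hinj : Function.Injective F := by
    rw [← LinearMap.ker_eq_bot, LinearMap.ker_eq_bot']
    intro d hd
    apply ofCoeffs_inj
    apply hu _ (ofCoeffs_deg _ _)
    intro k i j hij
    exact congrFun hd ⟨k, ⟨(i, j), (mem_triS _ _).2 (by simp only; omega)⟩⟩
  have hcard : Module.finrank ℝ (triS (2 * m) → ℝ) =
      Module.finrank ℝ ((Σ k, triS (![m, m, m, m - 1] k)) → ℝ) := by
    rw [Module.finrank_fintype_fun_eq_card, Module.finrank_fintype_fun_eq_card,
      Fintype.card_sigma]
    simp only [Fintype.card_coe, Fin.sum_univ_four]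
    have e1 := card_triS (2 * m)
    have e2 := card_triS m
    have e3 := card_triS (m - 1)
    obtain ⟨m, rfl⟩ : ∃ k, m = k + 1 := ⟨m - 1, by omega⟩
    simp only [Nat.add_sub_cancel] at *
    show (triS (2 * (m + 1))).card = (triS (m + 1)).card + (triS (m + 1)).card +
      (triS (m + 1)).card + (triS m).card
    nlinarith
  have hsurj := (LinearMap.injective_iff_surjective_of_finrank_eq_finrank hcard).1 hinj
  obtain ⟨d, hd⟩ := hsurj (fun x => c x.1 x.2.1.1 x.2.1.2)
  have hsol : ∀ (k : Fin 4) (i j : ℕ), i + j + 1 ≤ ![m, m, m, m - 1] k →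
      eval (A k) (Dij i j (ofCoeffs (2 * m) d)) = c k i j := by
    intro k i j hij
    exact congrFun hd ⟨k, ⟨(i, j), (mem_triS _ _).2 (by simp only; omega)⟩⟩
  refine ⟨ofCoeffs (2 * m) d, ⟨ofCoeffs_deg _ _, hsol⟩, ?_⟩
  rintro q ⟨hq, hq'⟩
  have hz : q + (-1 : ℝ) • ofCoeffs (2 * m) d = 0 := by
    apply hu
    · exact (totalDegree_add _ _).trans (max_le hq
        ((totalDegree_smul_le _ _).trans (ofCoeffs_deg _ _)))
    · intro k i j hij
      rw [Dij_add, Dij_smul, map_add, smul_eval, hq' k i j hij, hsol k i j hij]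
      ring
  rw [neg_one_smul] at hz
  exact add_neg_eq_zero.1 hz

theorem stmt_17 (m : ℕ) (hm : 1 ≤ m) (A : Fin 4 → Fin 2 → ℝ)
    (hA : Function.Injective A)
    (hcol : ∀ i j k : Fin 4, i ≠ j → i ≠ k → j ≠ k →
      ∀ l : MvPolynomial (Fin 2) ℝ, l ≠ 0 → l.totalDegree = 1 →
        ¬(eval (A i) l = 0 ∧ eval (A j) l = 0 ∧ eval (A k) l = 0)) :
    HermiteCorrect (2 * m - 1) 4 ![m, m, m, m - 1] A := by
  apply correct_of_unique m hm
  intro p hp h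
  by_contra h0
  refine unique_main A hA ?_ m p h0 (by omega)
    (multGe_of_Dij _ _ _ fun i j hij => h 0 i j hij) (multGe_of_Dij _ _ _ fun i j hij => h 1 i j hij)
    (multGe_of_Dij _ _ _ fun i j hij => h 2 i j hij) (multGe_of_Dij _ _ _ fun i j hij => h 3 i j hij)
  intro i j k hij hik hjk hz
  have hne : A i ≠ A j := fun h' => hij (hA h')
  have hd := lin_totalDegree hne
  refine hcol i j k hij hik hjk (lin (A i) (A j)) ?_ hd ⟨?_, ?_, hz⟩
  · intro h'; rw [h'] at hd; simp at hd
  · rw [eval_lin]; ring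
  · rw [eval_lin]; ring
end

section
/- Let m ≥ 1 and let A_1, A_2, A_3, A_4 be four distinct points of ℝ² no three of which are collinear. Then the Hermite problem with scheme {m+1, m, m, m; 2m} is 2m-correct; equivalently, the only p ∈ Π_{2m} with D^{ij}p(A_1) = 0 for all i+j ≤ m and D^{ij}p(A_k) = 0 for all i+j ≤ m−1 (k = 2,3,4) is p = 0. -/
open MvPolynomial

namespace Herm

abbrev P := MvPolynomial (Fin 2) ℝ

theorem pd_comm (p : P) : pderiv 0 (pderiv 1 p) = pderiv 1 (pderiv 0 p) := by
  induction p using MvPolynomial.induction_on with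
  | C a => simp
  | add p q hp hq => simp [hp, hq]
  | mul_X p i hp =>
    fin_cases i <;> simp [pderiv_mul, hp, pderiv_X, Pi.single_apply] <;> ring

/-- vanishing to order `n` at `A`. -/
def Mult (A : Fin 2 → ℝ) : ℕ → P → Prop
  | 0, _ => True
  | n + 1, p => eval A p = 0 ∧ Mult A n (pderiv 0 p) ∧ Mult A n (pderiv 1 p)

theorem mult_of_dij (A : Fin 2 → ℝ) (n : ℕ) : ∀ p : P,
    (∀ i j, i + j + 1 ≤ n → eval A (Dij i j p) = 0) → Mult A n p := by
  induction n with
  | zero => intro p _; trivial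
  | succ n ih =>
    intro p h
    refine ⟨h 0 0 (by omega), ih _ ?_, ih _ ?_⟩
    · intro i j hij
      have := h (i + 1) j (by omega)
      have e : Dij (i + 1) j p = Dij i j (pderiv 0 p) := by
        unfold Dij
        rw [Function.iterate_succ_apply]
        congr 1
        clear this hij
        induction j generalizing p with
        | zero => rfl
        | succ j ihj =>
          rw [Function.iterate_succ_apply', Function.iterate_succ_apply', pd_comm, ihj p h]
      rwa [e] at this
    · intro i j hij
      have := h i (j + 1) (by omega)
      unfold Dij at this ⊢
      rwa [Function.iterate_succ_apply] at this

theorem Mult.lin {A : Fin 2 → ℝ} {n : ℕ} : ∀ {p q : P} (a b : ℝ), Mult A n p → Mult A n q →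
    Mult A n (C a * p + C b * q) := by
  induction n with
  | zero => intros; trivial
  | succ n ih =>
    rintro p q a b ⟨h1, h2, h3⟩ ⟨g1, g2, g3⟩
    refine ⟨by simp [h1, g1], ?_, ?_⟩
    · simpa [pderiv_C_mul] using ih a b h2 g2
    · simpa [pderiv_C_mul] using ih a b h3 g3

theorem Mult.pred {A : Fin 2 → ℝ} {n : ℕ} : ∀ {p : P}, Mult A (n + 1) p → Mult A n p := by
  induction n with
  | zero => intros; trivial
  | succ n ih =>
    rintro p ⟨h1, h2, h3⟩
    exact ⟨h1, ih h2, ih h3⟩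

noncomputable def dd (a b : ℝ) (p : P) : P := C a * pderiv 0 p + C b * pderiv 1 p

theorem Mult.dd {A : Fin 2 → ℝ} {n : ℕ} {p : P} (h : Mult A (n + 1) p) (a b : ℝ) :
    Mult A n (dd a b p) := Mult.lin a b h.2.1 h.2.2

/-- affine polynomial -/
noncomputable def aff (a b c : ℝ) : P := C a * X 0 + C b * X 1 + C c

theorem pd0_aff (a b c : ℝ) : pderiv 0 (aff a b c) = C a := by
  simp [aff, pderiv_C_mul, pderiv_X, Pi.single_apply]

theorem pd1_aff (a b c : ℝ) : pderiv 1 (aff a b c) = C b := by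
  simp [aff, pderiv_C_mul, pderiv_X, Pi.single_apply]

theorem mult_cancel {A : Fin 2 → ℝ} {a b c : ℝ} (hl : eval A (aff a b c) ≠ 0) (n : ℕ) :
    ∀ q : P, Mult A n (aff a b c * q) → Mult A n q := by
  induction n with
  | zero => intros; trivial
  | succ n ih =>
    intro q h
    have hq := ih q h.pred
    obtain ⟨h1, h2, h3⟩ := h
    refine ⟨by simpa [hl] using h1, ih _ ?_, ih _ ?_⟩
    · have := Mult.lin 1 (-a) h2 hq
      rw [pderiv_mul, pd0_aff] at this
      convert this using 1
      simp only [map_neg, map_one]; ring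
    · have := Mult.lin 1 (-b) h3 hq
      rw [pderiv_mul, pd1_aff] at this
      convert this using 1
      simp only [map_neg, map_one]; ring

theorem mult_aux {A : Fin 2 → ℝ} {a b c : ℝ} (hl : eval A (aff a b c) = 0)
    (hs : 0 < a ^ 2 + b ^ 2) (n : ℕ) :
    ∀ (k : ℝ) (q : P), 0 < k → Mult A n (C k * q + aff a b c * dd a b q) → Mult A n q := by
  induction n with
  | zero => intros; trivial
  | succ n ih =>
    intro k q hk h
    have hu := ih (k + (a ^ 2 + b ^ 2)) (dd a b q) (by positivity) (by
      convert h.dd a b using 1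
      simp only [dd, map_add, pderiv_C_mul, pderiv_mul, pd0_aff, pd1_aff, pderiv_C, pd_comm,
        map_pow]
      ring)
    have hv := ih k (dd (-b) a q) hk (by
      convert h.dd (-b) a using 1
      simp only [dd, map_add, pderiv_C_mul, pderiv_mul, pd0_aff, pd1_aff, pderiv_C, pd_comm,
        map_pow, map_neg]
      ring)
    refine ⟨?_, ?_, ?_⟩
    · have := h.1
      simpa [hl, hk.ne'] using this
    · convert Mult.lin (a / (a ^ 2 + b ^ 2)) (-b / (a ^ 2 + b ^ 2)) hu hv using 1
      have e1 : a / (a ^ 2 + b ^ 2) * a + -b / (a ^ 2 + b ^ 2) * -b = 1 := by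
        field_simp
      have e2 : a / (a ^ 2 + b ^ 2) * b + -b / (a ^ 2 + b ^ 2) * a = 0 := by
        ring
      have e1' := congrArg (C : ℝ → P) e1
      have e2' := congrArg (C : ℝ → P) e2
      simp only [map_add, map_mul, map_one, map_zero] at e1' e2'
      unfold Herm.dd
      linear_combination (-pderiv 0 q) * e1' - pderiv 1 q * e2'
    · convert Mult.lin (b / (a ^ 2 + b ^ 2)) (a / (a ^ 2 + b ^ 2)) hu hv using 1
      have e1 : b / (a ^ 2 + b ^ 2) * b + a / (a ^ 2 + b ^ 2) * a = 1 := by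
        field_simp; ring
      have e2 : b / (a ^ 2 + b ^ 2) * a + a / (a ^ 2 + b ^ 2) * -b = 0 := by
        field_simp; ring
      have e1' := congrArg (C : ℝ → P) e1
      have e2' := congrArg (C : ℝ → P) e2
      simp only [map_add, map_mul, map_one, map_zero] at e1' e2'
      unfold Herm.dd
      linear_combination (-pderiv 1 q) * e1' - pderiv 0 q * e2'

theorem mult_div {A : Fin 2 → ℝ} {a b c : ℝ} (hl : eval A (aff a b c) = 0)
    (hs : 0 < a ^ 2 + b ^ 2) (n : ℕ) (q : P) (h : Mult A n (aff a b c * q)) :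
    Mult A (n - 1) q := by
  cases n with
  | zero => trivial
  | succ n =>
    refine mult_aux hl hs n (a ^ 2 + b ^ 2) q hs ?_
    convert h.dd a b using 1
    simp only [dd, map_add, pderiv_mul, pd0_aff, pd1_aff, map_pow]
    ring

/-- restriction to the line `A + t w`. -/
noncomputable def res (A w : Fin 2 → ℝ) : P →ₐ[ℝ] Polynomial ℝ :=
  aeval fun i => Polynomial.C (A i) + Polynomial.X * Polynomial.C (w i)

theorem res_deriv (A w : Fin 2 → ℝ) (p : P) :
    Polynomial.derivative (res A w p) = res A w (dd (w 0) (w 1) p) := by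
  induction p using MvPolynomial.induction_on with
  | C a => simp [res, dd]
  | add p q hp hq =>
    simp only [map_add, hp, hq, dd, mul_add, map_mul]; ring
  | mul_X p i hp =>
    have e : dd (w 0) (w 1) (p * X i) = dd (w 0) (w 1) p * X i + C (w i) * p := by
      fin_cases i <;> simp [dd, pderiv_mul, pderiv_X, Pi.single_apply] <;> ring
    rw [e, map_mul, Polynomial.derivative_mul, hp]
    simp [res, Polynomial.algebraMap_eq]
    ring

theorem res_eval (A w : Fin 2 → ℝ) (t : ℝ) (p : P) :
    (res A w p).eval t = eval (fun i => A i + t * w i) p := by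
  induction p using MvPolynomial.induction_on with
  | C a => simp [res, Polynomial.algebraMap_eq]
  | add p q hp hq => simp [hp, hq]
  | mul_X p i hp => simp [hp]; simp [res]; left; ring

theorem iter_root (A w B : Fin 2 → ℝ) (t : ℝ) (hB : ∀ i, B i = A i + t * w i) (n : ℕ) :
    ∀ p : P, Mult B n p → ∀ k < n, (Polynomial.derivative^[k] (res A w p)).IsRoot t := by
  induction n with
  | zero => intro p _ k hk; omega
  | succ n ih =>
    intro p h k hk
    cases k with
    | zero =>
      have := h.1
      rw [show B = _ from funext hB] at this
      simpa [Polynomial.IsRoot, res_eval] using this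
    | succ k =>
      rw [Function.iterate_succ_apply, res_deriv]
      exact ih _ (h.dd _ _) k (by omega)

theorem root_mult (A w B : Fin 2 → ℝ) (t : ℝ) (hB : ∀ i, B i = A i + t * w i) (n : ℕ)
    (p : P) (h : Mult B n p) (h0 : res A w p ≠ 0) : n ≤ (res A w p).rootMultiplicity t := by
  cases n with
  | zero => omega
  | succ n =>
    exact (Polynomial.lt_rootMultiplicity_iff_isRoot_iterate_derivative h0).2
      fun k hk => iter_root A w B t hB _ p h k (by omega)

theorem res_zero (A B : Fin 2 → ℝ) (a b : ℕ) (p : P) (hd : p.totalDegree < a + b)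
    (hA : Mult A a p) (hB : Mult B b p) : res A (fun i => B i - A i) p = 0 := by
  by_contra h0
  have h1 := root_mult A (fun i => B i - A i) A 0 (by simp) a p hA h0
  have h2 := root_mult A (fun i => B i - A i) B 1 (by simp) b p hB h0
  set r := res A (fun i => B i - A i) p
  have hdeg : r.natDegree ≤ p.totalDegree * 1 := aeval_natDegree_le p le_rfl _ (by
    intro i
    compute_degree)
  have := Polynomial.card_roots' r
  have h3 : r.rootMultiplicity 0 + r.rootMultiplicity 1 ≤ r.roots.card := by
    rw [← Polynomial.count_roots, ← Polynomial.count_roots]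
    rw [← Multiset.sum_count_eq_card (s := insert 0 (insert 1 r.roots.toFinset)) (by
      intro x hx; simp [Multiset.mem_toFinset.2 hx])]
    rw [← Finset.sum_pair (f := fun x => Multiset.count x r.roots) (zero_ne_one)]
    apply Finset.sum_le_sum_of_subset
    intro x; simp; tauto
  omega

noncomputable def ln (A B : Fin 2 → ℝ) : P :=
  aff (B 1 - A 1) (-(B 0 - A 0)) (-(B 1 - A 1) * A 0 + (B 0 - A 0) * A 1)

theorem ln_pos (A B : Fin 2 → ℝ) (h : A ≠ B) : 0 < (B 1 - A 1) ^ 2 + (-(B 0 - A 0)) ^ 2 := by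
  by_contra hc
  apply h
  ext i
  fin_cases i <;> simp <;> nlinarith [sq_nonneg (B 1 - A 1), sq_nonneg (B 0 - A 0)]

theorem ln_left (A B : Fin 2 → ℝ) : eval A (ln A B) = 0 := by
  simp [ln, aff]; ring

theorem ln_right (A B : Fin 2 → ℝ) : eval B (ln A B) = 0 := by
  simp [ln, aff]; ring

theorem ln_dvd (A B : Fin 2 → ℝ) (h : A ≠ B) (p : P)
    (h0 : res A (fun i => B i - A i) p = 0) : ln A B ∣ p := by
  have hs := ln_pos A B h
  set u := B 1 - A 1 with hu
  set v := B 0 - A 0 with hv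
  set s := u ^ 2 + (-v) ^ 2 with hs'
  let τ : P := C (v / s) * (X 0 - C (A 0)) + C (u / s) * (X 1 - C (A 1))
  let I : Ideal P := Ideal.span {ln A B}
  let π := Ideal.Quotient.mkₐ ℝ I
  have key : π = ((π.comp (Polynomial.aeval τ)).comp (res A (fun i => B i - A i))) := by
    apply MvPolynomial.algHom_ext
    intro i
    have e1 : v / s * v + u / s * u = 1 := by
      have hs0 : s ≠ 0 := hs.ne'
      field_simp
      rw [hs']; ring
    have e1' := congrArg (C : ℝ → P) e1
    simp only [map_add, map_mul, map_one, map_zero] at e1'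
    show Ideal.Quotient.mk I (X i) = Ideal.Quotient.mk I _
    rw [Ideal.Quotient.eq, Ideal.mem_span_singleton]
    simp only [res, aeval_X, AlgHom.coe_toRingHom, RingHom.coe_coe, map_add, map_mul, Polynomial.aeval_C, Polynomial.aeval_X,
      MvPolynomial.algebraMap_eq]
    fin_cases i
    · refine ⟨C (u / s), ?_⟩
      simp only [ln, aff, τ, ← hu, ← hv, Fin.zero_eta, Fin.isValue, map_add, map_mul, map_neg]
      linear_combination (-(X 0 - C (A 0))) * e1'
    · refine ⟨C (-(v / s)), ?_⟩
      simp only [ln, aff, τ, ← hu, ← hv, Fin.mk_one, Fin.isValue, map_add, map_mul, map_neg]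
      linear_combination (-(X 1 - C (A 1))) * e1'
  have : π p = 0 := by
    rw [key]; simp [h0]
  exact Ideal.mem_span_singleton.1 (Ideal.Quotient.eq_zero_iff_mem.1 this)

theorem ln_ne (A B : Fin 2 → ℝ) (h : A ≠ B) : ln A B ≠ 0 := by
  intro h0
  have hs := ln_pos A B h
  have h1 := pd0_aff (B 1 - A 1) (-(B 0 - A 0)) (-(B 1 - A 1) * A 0 + (B 0 - A 0) * A 1)
  have h2 := pd1_aff (B 1 - A 1) (-(B 0 - A 0)) (-(B 1 - A 1) * A 0 + (B 0 - A 0) * A 1)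
  change pderiv 0 (ln A B) = _ at h1
  change pderiv 1 (ln A B) = _ at h2
  rw [h0, map_zero] at h1 h2
  rw [(C_eq_zero.1 h1.symm), (C_eq_zero.1 h2.symm)] at hs
  simp at hs

theorem ln_deg (A B : Fin 2 → ℝ) (h : A ≠ B) : (ln A B).totalDegree = 1 := by
  apply le_antisymm
  · unfold ln aff
    generalize B 1 - A 1 = u
    generalize B 0 - A 0 = v
    generalize -u * A 0 + v * A 1 = c
    generalize -v = v
    refine (totalDegree_add _ _).trans (max_le ((totalDegree_add _ _).trans (max_le ?_ ?_)) ?_)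
    · exact (totalDegree_mul _ _).trans (by simp)
    · exact (totalDegree_mul _ _).trans (by simp)
    · simp
  · by_contra hc
    have h0 : (ln A B).totalDegree = 0 := by omega
    rw [totalDegree_eq_zero_iff_eq_C] at h0
    have h1 := ln_left A B
    rw [h0, eval_C] at h1
    rw [h1, map_zero] at h0
    exact ln_ne A B h h0

theorem step (A B : Fin 2 → ℝ) (h : A ≠ B) (a b : ℕ) (p : P) (hp : p ≠ 0)
    (hd : p.totalDegree < a + b)
    (hA : Mult A a p) (hB : Mult B b p) : ∃ q : P, q ≠ 0 ∧ p = ln A B * q ∧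
      q.totalDegree + 1 = p.totalDegree ∧ Mult A (a - 1) q ∧ Mult B (b - 1) q ∧
      ∀ D, eval D (ln A B) ≠ 0 → ∀ n, Mult D n p → Mult D n q := by
  obtain ⟨q, rfl⟩ := ln_dvd A B h p (res_zero A B a b p hd hA hB)
  have hq : q ≠ 0 := right_ne_zero_of_mul hp
  refine ⟨q, hq, rfl, ?_, mult_div (ln_left A B) (ln_pos A B h) _ _ hA,
    mult_div (ln_right A B) (ln_pos A B h) _ _ hB, fun D hD n hn => mult_cancel hD n q hn⟩
  rw [totalDegree_mul_of_isDomain (ln_ne A B h) hq, ln_deg A B h]; omega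

theorem uniq (A : Fin 4 → Fin 2 → ℝ) (hA : Function.Injective A)
    (hcol : ∀ i j k : Fin 4, i ≠ j → i ≠ k → j ≠ k → eval (A k) (ln (A i) (A j)) ≠ 0) (m : ℕ) :
    ∀ p : P, p.totalDegree ≤ 2 * m → Mult (A 0) (m + 1) p → Mult (A 1) m p → Mult (A 2) m p →
      Mult (A 3) m p → p = 0 := by
  induction m using Nat.strong_induction_on with
  | _ m ih =>
  intro p hd h0 h1 h2 h3
  by_contra hp
  have ne : ∀ i j : Fin 4, i ≠ j → A i ≠ A j := fun i j hij h => hij (hA h)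
  rcases Nat.eq_zero_or_pos m with rfl | hm
  · have e : p.totalDegree = 0 := by omega
    rw [totalDegree_eq_zero_iff_eq_C] at e
    have := h0.1
    rw [e, eval_C] at this
    rw [this, map_zero] at e
    exact hp e
  obtain ⟨q1, n1, -, d1, g0, g1, g⟩ := step (A 0) (A 1) (ne _ _ (by decide)) _ _ p hp
    (by omega) h0 h1
  have g2 := g _ (hcol 0 1 2 (by decide) (by decide) (by decide)) _ h2
  have g3 := g _ (hcol 0 1 3 (by decide) (by decide) (by decide)) _ h3
  clear h0 h1 h2 h3 g
  obtain ⟨q2, n2, -, d2, h0, h2, g⟩ := step (A 0) (A 2) (ne _ _ (by decide)) _ _ q1 n1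
    (by omega) g0 g2
  have h1 := g _ (hcol 0 2 1 (by decide) (by decide) (by decide)) _ g1
  have h3 := g _ (hcol 0 2 3 (by decide) (by decide) (by decide)) _ g3
  clear g0 g1 g2 g3 g
  obtain ⟨q3, n3, -, d3, g0, g3, g⟩ := step (A 0) (A 3) (ne _ _ (by decide)) _ _ q2 n2
    (by omega) h0 h3
  have g1 := g _ (hcol 0 3 1 (by decide) (by decide) (by decide)) _ h1
  have g2 := g _ (hcol 0 3 2 (by decide) (by decide) (by decide)) _ h2
  clear h0 h1 h2 h3 g
  obtain ⟨q4, n4, -, d4, h1, h2, g⟩ := step (A 1) (A 2) (ne _ _ (by decide)) _ _ q3 n3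
    (by omega) g1 g2
  have h0 := g _ (hcol 1 2 0 (by decide) (by decide) (by decide)) _ g0
  have h3 := g _ (hcol 1 2 3 (by decide) (by decide) (by decide)) _ g3
  clear g0 g1 g2 g3 g
  obtain ⟨q5, n5, -, d5, g1, g3, g⟩ := step (A 1) (A 3) (ne _ _ (by decide)) _ _ q4 n4
    (by omega) h1 h3
  have g0 := g _ (hcol 1 3 0 (by decide) (by decide) (by decide)) _ h0
  have g2 := g _ (hcol 1 3 2 (by decide) (by decide) (by decide)) _ h2
  clear h0 h1 h2 h3 g
  obtain ⟨q6, n6, -, d6, h2, h3, g⟩ := step (A 2) (A 3) (ne _ _ (by decide)) _ _ q5 n5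
    (by omega) g2 g3
  have h0 := g _ (hcol 2 3 0 (by decide) (by decide) (by decide)) _ g0
  have h1 := g _ (hcol 2 3 1 (by decide) (by decide) (by decide)) _ g1
  obtain ⟨k, rfl⟩ : ∃ k, m = k + 3 := ⟨m - 3, by omega⟩
  exact n6 (ih k (by omega) q6 (by omega) h0 h1 h2 h3)

def T (n : ℕ) : Finset (ℕ × ℕ) := (Finset.range n).biUnion Finset.HasAntidiagonal.antidiagonal

theorem mem_T (n : ℕ) (x : ℕ × ℕ) : x ∈ T n ↔ x.1 + x.2 < n := by
  simp [T]

theorem card_T (n : ℕ) : 2 * (T n).card = n * (n + 1) := by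
  have : (T n).card = ∑ d ∈ Finset.range n, (d + 1) := by
    unfold T
    rw [Finset.card_biUnion]
    · simp
    · intro a _ b _ hab
      rw [Function.onFun, Finset.disjoint_left]
      intro x hx hx'
      simp at hx hx'
      omega
  rw [this]
  clear this
  induction n with
  | zero => simp
  | succ n ih => rw [Finset.sum_range_succ, mul_add, ih]; ring

theorem finrank_restrict (n : ℕ) :
    Module.finrank ℝ (restrictTotalDegree (Fin 2) ℝ n) = (T (n + 1)).card := by
  unfold restrictTotalDegree
  rw [Module.finrank_eq_nat_card_basis (basisRestrictSupport ℝ _), ← Fintype.card_coe,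
    ← Nat.card_eq_fintype_card]
  refine Nat.card_congr (Equiv.subtypeEquiv
    (Finsupp.equivFunOnFinite.trans (finTwoArrowEquiv ℕ)) ?_)
  intro a
  rw [mem_T]
  simp [Finsupp.sum_fintype, Fin.sum_univ_two, Nat.lt_succ_iff, Finsupp.degree]

noncomputable def dLin (i j : ℕ) : P →ₗ[ℝ] P :=
  ((pderiv 0 : Derivation ℝ P P) : P →ₗ[ℝ] P) ^ i * ((pderiv 1 : Derivation ℝ P P) : P →ₗ[ℝ] P) ^ j

theorem dLin_apply (i j : ℕ) (p : P) : dLin i j p = Dij i j p := by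
  simp only [dLin, Dij, Module.End.mul_apply, Module.End.pow_apply]
  rfl

end Herm

open Herm in
theorem stmt_18 (m : ℕ) (hm : 1 ≤ m) (A : Fin 4 → Fin 2 → ℝ)
    (hA : Function.Injective A)
    (hcol : ∀ i j k : Fin 4, i ≠ j → i ≠ k → j ≠ k →
      ∀ l : MvPolynomial (Fin 2) ℝ, l ≠ 0 → l.totalDegree = 1 →
        ¬(eval (A i) l = 0 ∧ eval (A j) l = 0 ∧ eval (A k) l = 0)) :
    HermiteCorrect (2 * m) 4 ![m + 1, m, m, m] A := by
  have ne : ∀ i j : Fin 4, i ≠ j → A i ≠ A j := fun i j hij h => hij (hA h)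
  have hu := uniq A hA (fun i j k hij hik hjk h => hcol i j k hij hik hjk _
    (ln_ne _ _ (ne i j hij)) (ln_deg _ _ (ne i j hij)) ⟨ln_left _ _, ln_right _ _, h⟩) m
  set nk : Fin 4 → ℕ := ![m + 1, m, m, m] with hnk
  have hz : ∀ p : P, p.totalDegree ≤ 2 * m →
      (∀ (k : Fin 4) (i j : ℕ), i + j + 1 ≤ nk k → eval (A k) (Dij i j p) = 0) → p = 0 :=
    fun p hd h => hu p hd (mult_of_dij _ _ _ (h 0)) (mult_of_dij _ _ _ (h 1))
      (mult_of_dij _ _ _ (h 2)) (mult_of_dij _ _ _ (h 3))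
  let f : restrictTotalDegree (Fin 2) ℝ (2 * m) →ₗ[ℝ] ((Σ k : Fin 4, T (nk k)) → ℝ) :=
    LinearMap.pi fun x => ((aeval (A x.1) : P →ₐ[ℝ] ℝ).toLinearMap ∘ₗ
      dLin x.2.1.1 x.2.1.2) ∘ₗ Submodule.subtype _
  have hf : ∀ p x, f p x = eval (A x.1) (Dij x.2.1.1 x.2.1.2 p.1) := by
    intro p x
    simp [f, dLin_apply, aeval_eq_eval]
  have hinj : Function.Injective f := by
    rw [← LinearMap.ker_eq_bot, LinearMap.ker_eq_bot']
    intro p hp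
    apply Subtype.ext
    apply hz p.1 ((mem_restrictTotalDegree _ _ _).1 p.2)
    intro k i j hij
    have := congrFun hp ⟨k, ⟨(i, j), (mem_T _ _).2 hij⟩⟩
    rwa [hf] at this
  have hfr : Module.finrank ℝ (restrictTotalDegree (Fin 2) ℝ (2 * m)) =
      Module.finrank ℝ ((Σ k : Fin 4, T (nk k)) → ℝ) := by
    rw [finrank_restrict, Module.finrank_fintype_fun_eq_card, Fintype.card_sigma]
    simp only [Fintype.card_coe, Fin.sum_univ_four]
    simp only [hnk, Matrix.cons_val]
    have h1 := card_T (2 * m + 1)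
    have h2 := card_T (m + 1)
    have h3 := card_T m
    nlinarith
  have hsurj := (LinearMap.injective_iff_surjective_of_finrank_eq_finrank hfr).1 hinj
  intro c
  obtain ⟨p, hp⟩ := hsurj (fun x => c x.1 x.2.1.1 x.2.1.2)
  have hp' : ∀ (k : Fin 4) (i j : ℕ), i + j + 1 ≤ nk k → eval (A k) (Dij i j p.1) = c k i j := by
    intro k i j hij
    have := congrFun hp ⟨k, ⟨(i, j), (mem_T _ _).2 hij⟩⟩
    rwa [hf] at this
  refine ⟨p.1, ⟨(mem_restrictTotalDegree _ _ _).1 p.2, hp'⟩, ?_⟩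
  rintro q ⟨hq, hq'⟩
  rw [← sub_eq_zero]
  apply hz
  · exact (totalDegree_sub _ _).trans (max_le hq ((mem_restrictTotalDegree _ _ _).1 p.2))
  · intro k i j hij
    rw [← dLin_apply, map_sub, dLin_apply, dLin_apply, map_sub, hq' k i j hij, hp' k i j hij,
      sub_self]
end
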